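/- Let V = ℝⁿ and let R be a finite reduced root system in V (R consists of nonzero vectors, R ∩ ℝα = {±α} for each α ∈ R, and s_α(R) = R for every α ∈ R), with a choice of positive system R⁺ and a multiplicity function k : R → ℝ invariant under the reflection group W generated by {s_α : α ∈ R} (k(wα) = k(α) for all w ∈ W, α ∈ R). For ξ ∈ V define the Dunkl operator on smooth functions on Ω = {x ∈ V : ⟨α,x⟩ ≠ 0 for all α ∈ R⁺} by T_ξ f(x) = ∂_ξ f(x) + Σ_{α∈R⁺} k(α)(⟨α,ξ⟩/⟨α,x⟩)(f(x) − f(s_α x)). Then the Dunkl operators pairwise commute: for all ξ, η ∈ V and every smooth f : Ω → ℝ, T_ξ(T_η f) = T_η(T_ξ f) on Ω. -/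

import Mathlib

/-!
Since `k` is invariant, every summand of the Dunkl operator is unchanged under `α ↦ -α`, so the
operator equals the one with the sum over all of `R` and multiplicity `k / 2`
(`dunklOp_eq_full`); summing over the `W`-stable set `R` makes reindexing by reflections available.

For `x ∈ Ω`, expand `T_ξ (T_η f) x` (`dunklOp_dunklOp`). The second derivative is symmetric in
`ξ, η`, and so are the terms of first order, because
`∂_{s_α ξ} = ∂_ξ - (2⟨α,ξ⟩/⟨α,α⟩) ∂_α`. After reindexing `β = s_α γ` in the double sum, so that
`s_β s_α = s_α s_γ`, the antisymmetrization in `ξ, η` becomes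
`∑_{α,γ} k(α) k(γ) B(α,γ) / (⟨α,x⟩⟨γ,x⟩) * (f(x) - f(s_α x) - f(s_γ x) + f(s_α s_γ x))`,
where `B(α,γ) = ⟨α,ξ⟩⟨γ,η⟩ - ⟨α,η⟩⟨γ,ξ⟩` is alternating. The first three terms cancel by swapping
`α` and `γ`.

The last one, `∑ k(α) k(γ) B(α,γ) / (⟨α,x⟩⟨γ,x⟩) f(s_α s_γ x)`, vanishes as well
(`sum_rotation_eq_zero`). The map `Φ(α,γ) = (γ, s_γ α)` is a permutation of `R × R` preserving both
`k(α) k(γ)` and the rotation `s_α s_γ`. Along an orbit of `Φ` the consecutive roots `u₀, u₁, u₂, …`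
stay in the plane spanned by `u₀` and `u₁`, where the three-term relation
`B(u,v)/(⟨u,x⟩⟨v,x⟩) = B(p,v)/(⟨p,x⟩⟨v,x⟩) - B(p,u)/(⟨p,x⟩⟨u,x⟩)` with `p = u₀` holds; hence the
sum over a full cycle telescopes to zero.
-/

open scoped RealInnerProductSpace BigOperators

/-- The orthogonal reflection across the hyperplane `⟨α, x⟩ = 0`. -/
noncomputable def reflAlong {n : ℕ} (α x : EuclideanSpace ℝ (Fin n)) :
    EuclideanSpace ℝ (Fin n) :=
  x - (2 * ⟪α, x⟫ / ⟪α, α⟫) • α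

/-- The Dunkl operator
`T_ξ f(x) = ∂_ξ f(x) + ∑_{α ∈ R⁺} k(α) (⟨α,ξ⟩/⟨α,x⟩) (f(x) − f(s_α x))`. -/
noncomputable def dunklOp {n : ℕ} (Rp : Finset (EuclideanSpace ℝ (Fin n)))
    (k : EuclideanSpace ℝ (Fin n) → ℝ) (ξ : EuclideanSpace ℝ (Fin n))
    (f : EuclideanSpace ℝ (Fin n) → ℝ) (x : EuclideanSpace ℝ (Fin n)) : ℝ :=
  fderiv ℝ f x ξ +
    ∑ α ∈ Rp, k α * (⟪α, ξ⟫ / ⟪α, x⟫) * (f x - f (reflAlong α x))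

/-! ### Reflections -/

section Reflections

variable {n : ℕ}

local notation "V" => EuclideanSpace ℝ (Fin n)

/-- The reflection `reflAlong α` as a continuous linear map. -/
noncomputable def reflCLM (α : V) : V →L[ℝ] V :=
  ContinuousLinearMap.id ℝ V - (2 / ⟪α, α⟫) • (innerSL ℝ α).smulRight α

lemma reflCLM_apply (α x : V) : reflCLM α x = reflAlong α x := by
  simp only [reflCLM, reflAlong, sub_apply, smul_apply,
    ContinuousLinearMap.smulRight_apply, ContinuousLinearMap.id_apply, innerSL_apply_apply,
    smul_smul]
  congr 2
  ring

lemma inner_reflAlong_left (α x y : V) :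
    ⟪reflAlong α x, y⟫ = ⟪x, y⟫ - 2 * ⟪α, x⟫ / ⟪α, α⟫ * ⟪α, y⟫ := by
  simp [reflAlong, inner_sub_left, real_inner_smul_left]

lemma inner_reflAlong_right (α x y : V) :
    ⟪x, reflAlong α y⟫ = ⟪reflAlong α x, y⟫ := by
  rw [real_inner_comm, inner_reflAlong_left, inner_reflAlong_left, real_inner_comm x y]
  ring

lemma reflAlong_reflAlong {α : V} (hα : α ≠ 0) (x : V) :
    reflAlong α (reflAlong α x) = x := by
  have h : ⟪α, α⟫ ≠ 0 := inner_self_ne_zero.2 hα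
  have h2 : ⟪α, reflAlong α x⟫ = - ⟪α, x⟫ := by
    rw [inner_reflAlong_right, inner_reflAlong_left]
    field_simp
    ring
  conv_lhs => rw [reflAlong, h2]
  rw [reflAlong, sub_sub, ← add_smul]
  rw [show 2 * ⟪α, x⟫ / ⟪α, α⟫ + 2 * -⟪α, x⟫ / ⟪α, α⟫ = 0 by ring]
  simp

lemma reflAlong_self {α : V} (hα : α ≠ 0) : reflAlong α α = -α := by
  have h : ⟪α, α⟫ ≠ 0 := inner_self_ne_zero.2 hα
  rw [reflAlong, mul_div_assoc, div_self h, mul_one, two_smul]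
  abel

lemma reflAlong_neg (α x : V) : reflAlong (-α) x = reflAlong α x := by
  simp [reflAlong, neg_div]

/-- Reflections are isometries, so they intertwine `s_α` with `s_{s_γ α}`. -/
lemma reflAlong_conj {γ : V} (hγ : γ ≠ 0) (α x : V) :
    reflAlong (reflAlong γ α) (reflAlong γ x) = reflAlong γ (reflAlong α x) := by
  have h (y z : V) : ⟪reflAlong γ y, reflAlong γ z⟫ = ⟪y, z⟫ := by
    rw [inner_reflAlong_right, reflAlong_reflAlong hγ]
  rw [reflAlong.eq_def (reflAlong γ α), h, h, ← reflCLM_apply γ (reflAlong α x),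
    reflAlong.eq_def α x, map_sub, map_smul, reflCLM_apply, reflCLM_apply]

/-- The identity `s_γ s_{s_γ α} = s_α s_γ`. -/
lemma reflAlong_mul_conj {γ : V} (hγ : γ ≠ 0) (α x : V) :
    reflAlong γ (reflAlong (reflAlong γ α) x) = reflAlong α (reflAlong γ x) := by
  have h := reflAlong_conj hγ α (reflAlong γ x)
  rw [reflAlong_reflAlong hγ] at h
  rw [h, reflAlong_reflAlong hγ]

end Reflections

/-! ### Contributions of the rotations `s_α s_γ` -/

section Rotations

variable {n : ℕ}

local notation "V" => EuclideanSpace ℝ (Fin n)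

/-- The alternating bilinear form `ξ ∧ η` evaluated at `(u, v)`. -/
noncomputable def wedgeForm (ξ η u v : V) : ℝ := ⟪u, ξ⟫ * ⟪v, η⟫ - ⟪u, η⟫ * ⟪v, ξ⟫

/-- The coefficient `B(u,v) / (⟨u,x⟩⟨v,x⟩)`, with `B = wedgeForm ξ η`. It depends only on the lines
spanned by `u` and `v`. -/
noncomputable def wedgeQuot (ξ η x u v : V) : ℝ := wedgeForm ξ η u v / (⟪u, x⟫ * ⟪v, x⟫)

/-- The permutation `Φ(α,γ) = (γ, s_γ α)` of pairs of roots; it preserves `s_α s_γ`. -/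
noncomputable def pairShift (R : Finset V) (hR0 : ∀ α ∈ R, α ≠ 0)
    (hstab : ∀ α ∈ R, ∀ β ∈ R, reflAlong α β ∈ R) : Equiv.Perm (R × R) where
  toFun q := (q.2, ⟨reflAlong q.2 q.1, hstab _ q.2.2 _ q.1.2⟩)
  invFun q := (⟨reflAlong q.1 q.2, hstab _ q.1.2 _ q.2.2⟩, q.1)
  left_inv q := by
    ext1
    · exact Subtype.ext (reflAlong_reflAlong (hR0 _ q.2.2) _)
    · rfl
  right_inv q := by
    ext1
    · rfl
    · exact Subtype.ext (reflAlong_reflAlong (hR0 _ q.1.2) _)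

/-- The sum of all contributions of `f (s_α s_γ x)` vanishes: it telescopes along every orbit of
`pairShift`. -/
lemma sum_rotation_eq_zero (R : Finset V) (hR0 : ∀ α ∈ R, α ≠ 0)
    (hstab : ∀ α ∈ R, ∀ β ∈ R, reflAlong α β ∈ R) (k : V → ℝ)
    (hkinv : ∀ α ∈ R, ∀ β ∈ R, k (reflAlong α β) = k β) (ξ η x : V)
    (hx : ∀ α ∈ R, ⟪α, x⟫ ≠ 0) (f : V → ℝ) :
    ∑ α ∈ R, ∑ γ ∈ R,
      k α * k γ * wedgeQuot ξ η x α γ * f (reflAlong α (reflAlong γ x)) = 0 := by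
  set Φ := pairShift R hR0 hstab with hΦ
  let c : R × R → ℝ := fun q => k q.1 * k q.2 * f (reflAlong q.1 (reflAlong q.2 x))
  let t : R × R → ℝ := fun q => wedgeQuot ξ η x q.1 q.2
  have hc (q) : c (Φ q) = c q := by
    simp only [c, hΦ, pairShift, Equiv.coe_fn_mk]
    rw [hkinv _ q.2.2 _ q.1.2, reflAlong_mul_conj (hR0 _ q.2.2)]
    ring
  have hcj (j : ℕ) (q) : c ((Φ ^ j) q) = c q := by
    induction j with
    | zero => simp
    | succ j ih => rw [pow_succ', Equiv.Perm.mul_apply, hc, ih]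
  -- the three vectors `u₀, u_j, u_{j+1}` are coplanar
  have hD (q : R × R) (j : ℕ) :
      wedgeForm ξ η q.1 ((Φ ^ j) q).1 * ⟪(((Φ ^ j) q).2 : V), x⟫
        + wedgeForm ξ η ((Φ ^ j) q).1 ((Φ ^ j) q).2 * ⟪(q.1 : V), x⟫
        + wedgeForm ξ η ((Φ ^ j) q).2 q.1 * ⟪(((Φ ^ j) q).1 : V), x⟫ = 0 := by
    induction j with
    | zero =>
      simp only [pow_zero, Equiv.Perm.one_apply, wedgeForm]
      ring
    | succ j ih =>
      rw [pow_succ', Equiv.Perm.mul_apply]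
      generalize (Φ ^ j) q = r at ih ⊢
      simp only [hΦ, pairShift, Equiv.coe_fn_mk, wedgeForm, inner_reflAlong_left] at ih ⊢
      linear_combination -ih
  have htel (q : R × R) (j : ℕ) :
      t ((Φ ^ j) q) = wedgeQuot ξ η x q.1 ((Φ ^ (j + 1)) q).1
        - wedgeQuot ξ η x q.1 ((Φ ^ j) q).1 := by
    have h := hD q j
    have h1 : (((Φ ^ (j + 1)) q).1) = ((Φ ^ j) q).2 := by
      rw [pow_succ', Equiv.Perm.mul_apply]; rfl
    rw [h1]
    simp only [t]
    generalize (Φ ^ j) q = r at h ⊢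
    have ha := hx _ q.1.2
    have hb := hx _ r.1.2
    have hd := hx _ r.2.2
    simp only [wedgeQuot]
    have e : wedgeForm ξ η r.2 q.1 = - wedgeForm ξ η q.1 r.2 := by
      simp only [wedgeForm]; ring
    rw [e] at h
    field_simp
    linear_combination h
  have horb (q : R × R) : ∑ j ∈ Finset.range (orderOf Φ), t ((Φ ^ j) q) = 0 := by
    simp only [htel]
    rw [Finset.sum_range_sub (fun j => wedgeQuot ξ η x q.1 ((Φ ^ j) q).1), pow_orderOf_eq_one]
    simp
  have hS : (orderOf Φ : ℝ) * ∑ q, c q * t q = 0 := by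
    calc (orderOf Φ : ℝ) * ∑ q, c q * t q
        = ∑ j ∈ Finset.range (orderOf Φ), ∑ q, c q * t q := by simp
      _ = ∑ j ∈ Finset.range (orderOf Φ), ∑ q, c q * t ((Φ ^ j) q) := by
          refine Finset.sum_congr rfl fun j _ => ?_
          rw [← Equiv.sum_comp (Φ ^ j)]
          simp only [hcj]
      _ = 0 := by
          rw [Finset.sum_comm]
          simp only [← Finset.mul_sum, horb, mul_zero, Finset.sum_const_zero]
  have hN : (orderOf Φ : ℝ) ≠ 0 := by exact_mod_cast (orderOf_pos Φ).ne'
  have hS' := (mul_eq_zero.1 hS).resolve_left hN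
  rw [Fintype.sum_prod_type] at hS'
  rw [← Finset.sum_coe_sort R, ← hS']
  refine Finset.sum_congr rfl fun α _ => ?_
  rw [← Finset.sum_coe_sort R]
  refine Finset.sum_congr rfl fun γ _ => ?_
  simp only [c, t]
  ring

/-- An antisymmetric double sum vanishes. -/
lemma sum_antisymm_eq_zero (R : Finset V) (F : V → V → ℝ)
    (hF : ∀ α γ, F γ α = - F α γ) : ∑ α ∈ R, ∑ γ ∈ R, F α γ = 0 := by
  have h : ∑ α ∈ R, ∑ γ ∈ R, F α γ = - ∑ α ∈ R, ∑ γ ∈ R, F α γ := by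
    conv_lhs => rw [Finset.sum_comm]
    simp only [← Finset.sum_neg_distrib]
    exact Finset.sum_congr rfl fun α _ => Finset.sum_congr rfl fun γ _ => hF _ _
  linarith

end Rotations

/-! ### Composition of two Dunkl operators -/

section Dunkl

variable {n : ℕ}

local notation "V" => EuclideanSpace ℝ (Fin n)

/-- The summands are even in `α`, so the sum over `R⁺` is half the sum over `R`. -/
lemma dunklOp_eq_full (R Rp : Finset V) (hR0 : ∀ α ∈ R, α ≠ 0)
    (hunion : (R : Set V) = ↑Rp ∪ (fun α => -α) '' ↑Rp)
    (hdisj : Disjoint (Rp : Set V) ((fun α => -α) '' ↑Rp))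
    (k : V → ℝ) (hkinv : ∀ α ∈ R, ∀ β ∈ R, k (reflAlong α β) = k β) (ξ : V) (f : V → ℝ) :
    dunklOp Rp k ξ f = dunklOp R (fun α => k α / 2) ξ f := by
  classical
  funext x
  have hR : R = Rp ∪ Rp.image (fun α => -α) := by
    apply Finset.coe_injective
    rw [hunion]; simp
  have hd : Disjoint Rp (Rp.image (fun α => -α)) := by
    rw [← Finset.disjoint_coe]; simpa using hdisj
  have hk : ∀ α ∈ Rp, k (-α) = k α := fun α hα => by
    have hα' : α ∈ R := by rw [hR]; exact Finset.mem_union_left _ hα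
    rw [← reflAlong_self (hR0 α hα'), hkinv α hα' α hα']
  simp only [dunklOp]
  congr 1
  rw [hR, Finset.sum_union hd, Finset.sum_image fun a _ b _ h => neg_injective h,
    ← Finset.sum_add_distrib]
  refine Finset.sum_congr rfl fun α hα => ?_
  rw [hk α hα, reflAlong_neg, inner_neg_left, inner_neg_left, neg_div_neg_eq]
  ring

lemma isOpen_regular (R : Finset V) : IsOpen {x : V | ∀ α ∈ R, ⟪α, x⟫ ≠ 0} := by
  have : {x : V | ∀ α ∈ R, ⟪α, x⟫ ≠ 0} = ⋂ α ∈ R, {x : V | ⟪α, x⟫ ≠ 0} := by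
    ext; simp
  rw [this]
  refine isOpen_biInter_finset fun α _ => ?_
  exact isOpen_ne_fun (by fun_prop) continuous_const

lemma reflAlong_mem_regular (R : Finset V) (hstab : ∀ α ∈ R, ∀ β ∈ R, reflAlong α β ∈ R)
    {x : V} (hx : ∀ α ∈ R, ⟪α, x⟫ ≠ 0) {α : V} (hα : α ∈ R) :
    ∀ β ∈ R, ⟪β, reflAlong α x⟫ ≠ 0 := fun β hβ => by
  rw [inner_reflAlong_right]
  exact hx _ (hstab α hα β hβ)

lemma fderiv_dunklOp (R : Finset V) (hstab : ∀ α ∈ R, ∀ β ∈ R, reflAlong α β ∈ R)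
    (k : V → ℝ) (ξ η : V) (f : V → ℝ)
    (hf : ∀ x : V, (∀ α ∈ R, ⟪α, x⟫ ≠ 0) → ContDiffAt ℝ 2 f x)
    (x : V) (hx : ∀ α ∈ R, ⟪α, x⟫ ≠ 0) :
    fderiv ℝ (dunklOp R k η f) x ξ = fderiv ℝ (fderiv ℝ f) x ξ η
      + ∑ α ∈ R, k α * (-(⟪α, η⟫ * ⟪α, ξ⟫ / ⟪α, x⟫ ^ 2) * (f x - f (reflAlong α x))
        + ⟪α, η⟫ / ⟪α, x⟫ *
          (fderiv ℝ f x ξ - fderiv ℝ f (reflAlong α x) (reflAlong α ξ))) := by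
  have hd {y : V} (hy : ∀ α ∈ R, ⟪α, y⟫ ≠ 0) : HasFDerivAt f (fderiv ℝ f y) y :=
    ((hf y hy).differentiableAt (by norm_num)).hasFDerivAt
  have h2 : HasFDerivAt (fderiv ℝ f) (fderiv ℝ (fderiv ℝ f) x) x :=
    (((hf x hx).fderiv_right (m := 1) (by norm_num)).differentiableAt (by norm_num)).hasFDerivAt
  have h2' := h2.clm_apply (hasFDerivAt_const η x)
  have hterm : ∀ α ∈ R, HasFDerivAt
      (fun y => k α * (⟪α, η⟫ / ⟪α, y⟫) * (f y - f (reflAlong α y)))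
      ((k α * (⟪α, η⟫ / ⟪α, x⟫)) • (fderiv ℝ f x - (fderiv ℝ f (reflAlong α x)).comp (reflCLM α))
        + (f x - f (reflAlong α x)) •
          ((k α * ⟪α, η⟫) • ((-(⟪α, x⟫ ^ 2)⁻¹) • innerSL ℝ α))) x := by
    intro α hα
    have hi : HasFDerivAt (fun y : V => ⟪α, y⟫) (innerSL ℝ α) x :=
      (innerSL ℝ α).hasFDerivAt
    have hinv := ((hasDerivAt_inv (hx α hα)).comp_hasFDerivAt x hi).const_mul (k α * ⟪α, η⟫)
    have hr : HasFDerivAt (reflAlong α) (reflCLM α) x := by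
      have := (reflCLM α).hasFDerivAt (x := x)
      rwa [show (⇑(reflCLM α) : V → V) = reflAlong α from funext (reflCLM_apply α)] at this
    have hs := (hd hx).sub
      (HasFDerivAt.comp x (hd (reflAlong_mem_regular R hstab hx hα)) hr)
    have := hinv.mul hs
    refine (this.congr_of_eventuallyEq (.of_forall fun y => ?_)).congr_fderiv ?_
    · simp only [Function.comp, Pi.mul_apply, Pi.sub_apply]
      ring
    · simp only [Function.comp, Pi.sub_apply]
      congr 2
      ring
  have hall := h2'.add (HasFDerivAt.fun_sum hterm)
  have heq : dunklOp R k η f = (fun y => fderiv ℝ f y η) +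
      fun y => ∑ α ∈ R, k α * (⟪α, η⟫ / ⟪α, y⟫) * (f y - f (reflAlong α y)) := rfl
  rw [heq, hall.fderiv]
  simp only [add_apply, sum_apply]
  congr 1
  · simp
  · refine Finset.sum_congr rfl fun α _ => ?_
    simp only [smul_apply,
      sub_apply, ContinuousLinearMap.comp_apply, reflCLM_apply,
      innerSL_apply_apply, smul_eq_mul]
    ring

/-- The value of `T_η f` at `s_α x`, reindexed by `β = s_α γ`. -/
lemma dunklOp_reflAlong (R : Finset V) (hR0 : ∀ α ∈ R, α ≠ 0)
    (hstab : ∀ α ∈ R, ∀ β ∈ R, reflAlong α β ∈ R) (k : V → ℝ)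
    (hkinv : ∀ α ∈ R, ∀ β ∈ R, k (reflAlong α β) = k β) (η : V) (f : V → ℝ) (x α : V)
    (hα : α ∈ R) :
    dunklOp R k η f (reflAlong α x) = fderiv ℝ f (reflAlong α x) η
      + ∑ γ ∈ R, k γ * (⟪reflAlong α γ, η⟫ / ⟪γ, x⟫) *
        (f (reflAlong α x) - f (reflAlong α (reflAlong γ x))) := by
  rw [dunklOp]
  congr 1
  refine Finset.sum_nbij' (reflAlong α) (reflAlong α) (fun β hβ => hstab α hα β hβ)
    (fun β hβ => hstab α hα β hβ) (fun β _ => reflAlong_reflAlong (hR0 α hα) β)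
    (fun β _ => reflAlong_reflAlong (hR0 α hα) β) fun β hβ => ?_
  rw [hkinv α hα β hβ, reflAlong_reflAlong (hR0 α hα), reflAlong_mul_conj (hR0 α hα),
    inner_reflAlong_right]

/-- Expansion of `T_ξ (T_η f)`: the first two groups of terms are symmetric in `ξ` and `η`, and in
the double sum only the alternating part in `(α, γ)` distinguishes `ξ` from `η`. -/
lemma dunklOp_dunklOp (R : Finset V) (hR0 : ∀ α ∈ R, α ≠ 0)
    (hstab : ∀ α ∈ R, ∀ β ∈ R, reflAlong α β ∈ R) (k : V → ℝ)
    (hkinv : ∀ α ∈ R, ∀ β ∈ R, k (reflAlong α β) = k β) (ξ η : V) (f : V → ℝ)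
    (hf : ∀ x : V, (∀ α ∈ R, ⟪α, x⟫ ≠ 0) → ContDiffAt ℝ 2 f x)
    (x : V) (hx : ∀ α ∈ R, ⟪α, x⟫ ≠ 0) :
    dunklOp R k ξ (dunklOp R k η f) x = fderiv ℝ (fderiv ℝ f) x ξ η
      + ∑ α ∈ R, k α * (-(⟪α, η⟫ * ⟪α, ξ⟫ / ⟪α, x⟫ ^ 2) * (f x - f (reflAlong α x))
        + ⟪α, η⟫ / ⟪α, x⟫ * (fderiv ℝ f x ξ - (fderiv ℝ f (reflAlong α x) ξ
            - 2 * ⟪α, ξ⟫ / ⟪α, α⟫ * fderiv ℝ f (reflAlong α x) α))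
        + ⟪α, ξ⟫ / ⟪α, x⟫ * (fderiv ℝ f x η - fderiv ℝ f (reflAlong α x) η))
      + ∑ α ∈ R, ∑ γ ∈ R, k α * k γ * (⟪α, ξ⟫ / (⟪α, x⟫ * ⟪γ, x⟫)) *
        (⟪γ, η⟫ * (f x - f (reflAlong γ x))
          - (⟪γ, η⟫ - 2 * ⟪α, γ⟫ / ⟪α, α⟫ * ⟪α, η⟫) *
            (f (reflAlong α x) - f (reflAlong α (reflAlong γ x)))) := by
  conv_lhs => rw [dunklOp]
  rw [fderiv_dunklOp R hstab k ξ η f hf x hx, add_assoc, add_assoc, ← Finset.sum_add_distrib,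
    ← Finset.sum_add_distrib]
  congr 1
  refine Finset.sum_congr rfl fun α hα => ?_
  have hre : fderiv ℝ f (reflAlong α x) (reflAlong α ξ) = fderiv ℝ f (reflAlong α x) ξ
      - 2 * ⟪α, ξ⟫ / ⟪α, α⟫ * fderiv ℝ f (reflAlong α x) α := by
    conv_lhs => rw [reflAlong.eq_def α ξ, map_sub, map_smul, smul_eq_mul]
  rw [dunklOp_reflAlong R hR0 hstab k hkinv η f x α hα, hre]
  have hsum : ∑ γ ∈ R, k α * k γ * (⟪α, ξ⟫ / (⟪α, x⟫ * ⟪γ, x⟫)) *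
        (⟪γ, η⟫ * (f x - f (reflAlong γ x))
          - (⟪γ, η⟫ - 2 * ⟪α, γ⟫ / ⟪α, α⟫ * ⟪α, η⟫) *
            (f (reflAlong α x) - f (reflAlong α (reflAlong γ x))))
      = k α * (⟪α, ξ⟫ / ⟪α, x⟫) *
        (∑ γ ∈ R, k γ * (⟪γ, η⟫ / ⟪γ, x⟫) * (f x - f (reflAlong γ x))
        - ∑ γ ∈ R, k γ * (⟪reflAlong α γ, η⟫ / ⟪γ, x⟫) *
          (f (reflAlong α x) - f (reflAlong α (reflAlong γ x)))) := by
    rw [← Finset.sum_sub_distrib, Finset.mul_sum]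
    refine Finset.sum_congr rfl fun γ _ => ?_
    rw [inner_reflAlong_left]
    ring
  rw [hsum, dunklOp]
  ring

lemma dunklOp_comm_full (R : Finset V) (hR0 : ∀ α ∈ R, α ≠ 0)
    (hstab : ∀ α ∈ R, ∀ β ∈ R, reflAlong α β ∈ R) (k : V → ℝ)
    (hkinv : ∀ α ∈ R, ∀ β ∈ R, k (reflAlong α β) = k β) (ξ η : V) (f : V → ℝ)
    (hf : ∀ x : V, (∀ α ∈ R, ⟪α, x⟫ ≠ 0) → ContDiffAt ℝ 2 f x)
    (x : V) (hx : ∀ α ∈ R, ⟪α, x⟫ ≠ 0) :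
    dunklOp R k ξ (dunklOp R k η f) x = dunklOp R k η (dunklOp R k ξ f) x := by
  rw [dunklOp_dunklOp R hR0 hstab k hkinv ξ η f hf x hx,
    dunklOp_dunklOp R hR0 hstab k hkinv η ξ f hf x hx]
  have hsymm : fderiv ℝ (fderiv ℝ f) x ξ η = fderiv ℝ (fderiv ℝ f) x η ξ :=
    ((hf x hx).isSymmSndFDerivAt (by simp)) ξ η
  rw [hsymm]
  congr 1
  · congr 1
    refine Finset.sum_congr rfl fun α _ => ?_
    ring
  · rw [← sub_eq_zero, ← Finset.sum_sub_distrib]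
    have h1 := sum_rotation_eq_zero R hR0 hstab k hkinv ξ η x hx f
    have h2 := sum_antisymm_eq_zero R (fun α γ => k α * k γ * wedgeQuot ξ η x α γ *
      (f x - f (reflAlong α x) - f (reflAlong γ x))) fun α γ => by
        simp only [wedgeQuot, wedgeForm]
        ring
    have h3 := congrArg₂ (· + ·) h1 h2
    simp only [← Finset.sum_add_distrib, add_zero] at h3
    rw [← h3]
    refine Finset.sum_congr rfl fun α _ => ?_
    rw [← Finset.sum_sub_distrib]
    refine Finset.sum_congr rfl fun γ _ => ?_
    simp only [wedgeQuot, wedgeForm]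
    ring

end Dunkl

/-- **Commutativity of the Dunkl operators (Dunkl).** For a finite reduced root
system `R` with positive system `R⁺` and a multiplicity function `k` invariant
under the reflection group (equivalently, under every generating reflection),
the Dunkl operators pairwise commute on smooth functions on the complement
`Ω = {x : ⟨α,x⟩ ≠ 0 for all α ∈ R⁺}` of the reflection hyperplanes. -/
theorem dunkl_operators_commute {n : ℕ}
    (R Rp : Finset (EuclideanSpace ℝ (Fin n)))
    (hR0 : ∀ α ∈ R, α ≠ 0)
    (hreduced : ∀ α ∈ R, ∀ c : ℝ, c • α ∈ R → c = 1 ∨ c = -1)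
    (hstab : ∀ α ∈ R, ∀ β ∈ R, reflAlong α β ∈ R)
    (hunion : (R : Set (EuclideanSpace ℝ (Fin n))) = ↑Rp ∪ (fun α => -α) '' ↑Rp)
    (hdisj : Disjoint (Rp : Set (EuclideanSpace ℝ (Fin n))) ((fun α => -α) '' ↑Rp))
    (k : EuclideanSpace ℝ (Fin n) → ℝ)
    (hkinv : ∀ α ∈ R, ∀ β ∈ R, k (reflAlong α β) = k β)
    (Ω : Set (EuclideanSpace ℝ (Fin n)))
    (hΩ : Ω = {x | ∀ α ∈ Rp, ⟪α, x⟫ ≠ 0})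
    (ξ η : EuclideanSpace ℝ (Fin n))
    (f : EuclideanSpace ℝ (Fin n) → ℝ)
    (hf : ContDiffOn ℝ (⊤ : ℕ∞) f Ω) :
    ∀ x ∈ Ω, dunklOp Rp k ξ (dunklOp Rp k η f) x =
      dunklOp Rp k η (dunklOp Rp k ξ f) x := by
  intro x hx
  subst hΩ
  have hmem : ∀ y : EuclideanSpace ℝ (Fin n),
      (∀ α ∈ Rp, ⟪α, y⟫ ≠ 0) ↔ ∀ α ∈ R, ⟪α, y⟫ ≠ 0 := by
    intro y
    have hR : ∀ α, α ∈ R ↔ α ∈ Rp ∨ ∃ β ∈ Rp, -β = α := fun α => by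
      rw [← Finset.mem_coe, hunion]
      simp only [Set.mem_union, Set.mem_image, Finset.mem_coe]
    constructor
    · intro h α hα
      rcases (hR α).1 hα with h' | ⟨β, hβ, rfl⟩
      · exact h α h'
      · rw [inner_neg_left]; exact neg_ne_zero.2 (h β hβ)
    · exact fun h α hα => h α ((hR α).2 (Or.inl hα))
  have hf' : ∀ y : EuclideanSpace ℝ (Fin n), (∀ α ∈ R, ⟪α, y⟫ ≠ 0) → ContDiffAt ℝ 2 f y := by
    intro y hy
    have := (hf.contDiffAt ((isOpen_regular Rp).mem_nhds ((hmem y).2 hy)))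
    exact this.of_le (WithTop.coe_le_coe.2 (le_top : (2 : ℕ∞) ≤ ⊤))
  simp only [dunklOp_eq_full R Rp hR0 hunion hdisj k hkinv]
  exact dunklOp_comm_full R hR0 hstab _ (fun α hα β hβ => by simp only [hkinv α hα β hβ])
    ξ η f hf' x ((hmem x).1 hx)
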